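/- Let (X,T) be a dynamical system on a compact metric space and μ a T-invariant Borel probability measure. Then the Bowen topological entropy of the set G_μ of μ-generic points satisfies h_top(G_μ) ≤ h_μ. -/

import Mathlib

open MeasureTheory Filter Topology Set
open scoped ENNReal NNReal

/-!  General definitions: Bowen topological entropy (via covers by Bowen balls),
measure-theoretic (Kolmogorov–Sinai) entropy, generic points, saturated systems,
and the specification property. -/

variable {X : Type*}

/-- The Bowen ball of center `x`, order `n`, radius `ε` (for the metric
`d_n(x,y) = max_{0 ≤ j < n} d(T^j x, T^j y)`). -/
def bowenBall [PseudoMetricSpace X] (T : X → X) (x : X) (n : ℕ) (ε : ℝ) : Set X :=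
  {y | ∀ j < n, dist (T^[j] x) (T^[j] y) < ε}

/-- `H_n^s(Z,ε)`: infimum of `Σ_i exp(-s n_i)` over countable covers of `Z` by Bowen balls
`B_{n_i}(x_i,ε)` with all `n_i ≥ n`. -/
noncomputable def bowenH [PseudoMetricSpace X] (T : X → X) (Z : Set X) (s ε : ℝ) (n : ℕ) :
    ℝ≥0∞ :=
  ⨅ (C : Set (X × ℕ)) (_ : C.Countable) (_ : ∀ p ∈ C, n ≤ p.2)
    (_ : Z ⊆ ⋃ p ∈ C, bowenBall T p.1 p.2 ε),
    ∑' p : C, ENNReal.ofReal (Real.exp (-s * ((p : X × ℕ).2 : ℝ)))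

/-- `h_top(Z,ε)`: the critical exponent of `s ↦ H^s(Z,ε) = sup_n H_n^s(Z,ε)`. -/
noncomputable def bowenEntropyRes [PseudoMetricSpace X] (T : X → X) (Z : Set X) (ε : ℝ) :
    ℝ≥0∞ :=
  sInf ((fun s : ℝ≥0 => (s : ℝ≥0∞)) '' {s : ℝ≥0 | (⨆ n, bowenH T Z (s : ℝ) ε n) = 0})

/-- Bowen topological entropy of a subset `Z`: `h_top(Z) = lim_{ε → 0} h_top(Z,ε)`
(the limit being a supremum by monotonicity in `ε`). -/
noncomputable def bowenEntropy [PseudoMetricSpace X] (T : X → X) (Z : Set X) : ℝ≥0∞ :=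
  ⨆ (ε : ℝ) (_ : 0 < ε), bowenEntropyRes T Z ε

/-- Entropy of the partition `P ∨ T⁻¹P ∨ ⋯ ∨ T⁻⁽ⁿ⁻¹⁾P`, where a countable partition is
encoded as a function `P : X → ℕ`: it is the Shannon entropy of the map
`x ↦ (P x, P (T x), …, P (Tⁿ⁻¹ x))`. -/
noncomputable def partInfo [MeasurableSpace X] (T : X → X) (μ : Measure X) (P : X → ℕ)
    (n : ℕ) : ℝ≥0∞ :=
  ∑' l : List ℕ, ENNReal.ofReal (Real.negMulLog
    ((μ ((fun x => (List.range n).map fun j => P (T^[j] x)) ⁻¹' {l})).toReal))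

/-- Measure-theoretic (Kolmogorov–Sinai) entropy `h_μ(T)`: supremum over finite measurable
partitions `P` of `lim_n (1/n) H_μ(P ∨ T⁻¹P ∨ ⋯ ∨ T⁻⁽ⁿ⁻¹⁾P)` (the limit exists by
subadditivity, so it may be written as a `liminf`). -/
noncomputable def ksEntropy [MeasurableSpace X] (T : X → X) (μ : Measure X) : ℝ≥0∞ :=
  ⨆ (P : X → ℕ) (_ : Measurable P) (_ : (Set.range P).Finite),
    Filter.atTop.liminf fun n : ℕ => partInfo T μ P n / (n : ℝ≥0∞)

/-- `x` is a generic point for `μ` : the empirical measures `(1/n) Σ_{j<n} δ_{T^j x}`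
converge to `μ` in the weak-star topology, i.e. Birkhoff averages of every continuous
function converge to its integral. -/
def IsGeneric [TopologicalSpace X] [MeasurableSpace X] (T : X → X) (μ : Measure X)
    (x : X) : Prop :=
  ∀ f : C(X, ℝ), Tendsto (fun n : ℕ => (∑ j ∈ Finset.range n, f (T^[j] x)) / (n : ℝ))
    atTop (𝓝 (∫ y, f y ∂μ))

/-- `μ ∈ V(x)` : `μ` is a weak-star limit point of the empirical measures of `x`. -/
def IsLimitMeasure [TopologicalSpace X] [MeasurableSpace X] (T : X → X) (x : X)
    (μ : Measure X) : Prop :=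
  ∃ φ : ℕ → ℕ, StrictMono φ ∧ ∀ f : C(X, ℝ),
    Tendsto (fun m : ℕ => (∑ j ∈ Finset.range (φ m), f (T^[j] x)) / (φ m : ℝ))
      atTop (𝓝 (∫ y, f y ∂μ))

/-- A system is saturated if `h_top(G_μ) = h_μ` for every invariant Borel probability
measure `μ`. -/
def Saturated [PseudoMetricSpace X] [MeasurableSpace X] (T : X → X) : Prop :=
  ∀ μ : Measure X, IsProbabilityMeasure μ → MeasurePreserving T μ μ →
    bowenEntropy T {x | IsGeneric T μ x} = ksEntropy T μ

/-- The specification property. -/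
def SpecificationProperty [PseudoMetricSpace X] (T : X → X) : Prop :=
  ∀ ε : ℝ, 0 < ε → ∃ m : ℕ, 1 ≤ m ∧
    ∀ k : ℕ, 2 ≤ k → ∀ x : ℕ → X, ∀ a b : ℕ → ℕ,
      (∀ i < k, a i ≤ b i) →
      (∀ i, i + 1 < k → b i + m ≤ a (i + 1)) →
      ∃ y : X, ∀ i < k, ∀ n ≤ b i - a i,
        dist (T^[a i + n] y) (T^[n] (x i)) < ε

/-!
Given `s > h_μ`, choose a finite partition `P` of small mesh whose cells have `μ`-null boundary, a
block length `m` such that the `m`-blocks of `P` have entropy less than `m * s`, and a length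
function `ℓ` on blocks satisfying Kraft's inequality with `∫ ℓ dμ < m * s`. Along the orbit of a
generic point the average of `ℓ` tends to `∫ ℓ dμ`, so cutting the orbit into `L` consecutive
`m`-blocks, from the best starting residue modulo `m`, gives a total length of at most `L * m * s`.
By Kraft's inequality there are at most `exp (L * m * s)` such sequences of blocks. This bounds the
number of Bowen balls of order `L * m` needed to cover the points whose averages of `ℓ` stay below
`m * s` from a fixed time on, and the generic points lie in a countable union of such sets.
-/

section BowenEntropy

variable [PseudoMetricSpace X] {T : X → X} {s ε : ℝ} {n : ℕ}

theorem bowenH_le_tsum {Z : Set X} {C : Set (X × ℕ)} (hC : C.Countable) (hn : ∀ p ∈ C, n ≤ p.2)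
    (hZ : Z ⊆ ⋃ p ∈ C, bowenBall T p.1 p.2 ε) :
    bowenH T Z s ε n ≤ ∑' p : C, ENNReal.ofReal (Real.exp (-s * ((p : X × ℕ).2 : ℝ))) :=
  iInf₂_le_of_le C hC (iInf₂_le hn hZ)

theorem exists_cover_of_bowenH_lt {Z : Set X} {δ : ℝ≥0∞} (h : bowenH T Z s ε n < δ) :
    ∃ C : Set (X × ℕ), C.Countable ∧ (∀ p ∈ C, n ≤ p.2) ∧
      Z ⊆ ⋃ p ∈ C, bowenBall T p.1 p.2 ε ∧
      ∑' p : C, ENNReal.ofReal (Real.exp (-s * ((p : X × ℕ).2 : ℝ))) < δ := by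
  simpa only [bowenH, iInf_lt_iff, exists_prop] using h

theorem bowenH_mono {Z Z' : Set X} (h : Z ⊆ Z') : bowenH T Z s ε n ≤ bowenH T Z' s ε n :=
  le_iInf₂ fun _ hC => le_iInf₂ fun hn hZ' => bowenH_le_tsum hC hn (h.trans hZ')

theorem bowenH_iUnion_eq_zero {ι : Type*} [Countable ι] {Z : ι → Set X}
    (h : ∀ i, bowenH T (Z i) s ε n = 0) : bowenH T (⋃ i, Z i) s ε n = 0 := by
  by_contra h0
  obtain ⟨δ, hδ, hsum⟩ := ENNReal.exists_pos_sum_of_countable' h0 ι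
  choose C hC hn hZ hlt using fun i => exists_cover_of_bowenH_lt ((h i).trans_lt (hδ i))
  refine hsum.not_ge ?_
  calc bowenH T (⋃ i, Z i) s ε n
      ≤ ∑' p : ⋃ i, C i, ENNReal.ofReal (Real.exp (-s * ((p : X × ℕ).2 : ℝ))) :=
        bowenH_le_tsum (countable_iUnion hC)
          (fun p hp => (mem_iUnion.1 hp).elim fun i hi => hn i p hi)
          (iUnion_subset fun i => (hZ i).trans (biUnion_subset_biUnion_left (subset_iUnion C i)))
    _ ≤ ∑' i, ∑' p : C i, ENNReal.ofReal (Real.exp (-s * ((p : X × ℕ).2 : ℝ))) :=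
        ENNReal.tsum_iUnion_le_tsum (fun p : X × ℕ => ENNReal.ofReal (Real.exp (-s * p.2))) C
    _ ≤ ∑' i, δ i := ENNReal.tsum_le_tsum fun i => (hlt i).le

theorem bowenH_le_card_mul_exp {K : Type*} {Z : Set X} {N : ℕ} (hn : n ≤ N) {code : X → K}
    {S : Finset K} (hS : MapsTo code Z S)
    (hcode : ∀ x y, code x = code y → y ∈ bowenBall T x N ε) :
    bowenH T Z s ε n ≤ S.card * ENNReal.ofReal (Real.exp (-s * N)) := by
  obtain ⟨t, -, ht⟩ := exists_subset_bijOn Z code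
  have hfin : (t ×ˢ {N}).Finite :=
    .prod (.of_finite_image (S.finite_toSet.subset (ht.image_eq ▸ hS.image_subset)) ht.injOn)
      (finite_singleton N)
  have hsnd : ∀ p ∈ t ×ˢ {N}, p.2 = N := fun p hp => hp.2
  have hcover : Z ⊆ ⋃ p ∈ t ×ˢ {N}, bowenBall T p.1 p.2 ε := fun x hx => by
    obtain ⟨y, hy, hyx⟩ := ht.surjOn (mem_image_of_mem code hx)
    exact mem_biUnion (mk_mem_prod hy rfl) (hcode y x hyx)
  have hcard : (t ×ˢ {N}).encard ≤ S.card := by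
    rw [encard_prod, encard_singleton, mul_one, ← ht.injOn.encard_image, ht.image_eq,
      ← encard_coe_eq_coe_finsetCard]
    exact encard_le_encard hS.image_subset
  calc bowenH T Z s ε n
      ≤ ∑' p : t ×ˢ {N}, ENNReal.ofReal (Real.exp (-s * ((p : X × ℕ).2 : ℝ))) :=
        bowenH_le_tsum hfin.countable (fun p hp => hn.trans_eq (hsnd p hp).symm) hcover
    _ = ∑' _ : t ×ˢ {N}, ENNReal.ofReal (Real.exp (-s * N)) :=
        tsum_congr fun p => by rw [hsnd p p.2]
    _ ≤ S.card * ENNReal.ofReal (Real.exp (-s * N)) := by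
        rw [ENNReal.tsum_set_const]
        gcongr
        exact_mod_cast hcard

theorem bowenEntropyRes_le {Z : Set X} {s : ℝ≥0} (h : ∀ n, bowenH T Z s ε n = 0) :
    bowenEntropyRes T Z ε ≤ s :=
  sInf_le (mem_image_of_mem _ (by simp [h]))

theorem bowenEntropy_le_of_forall_bowenH_eq_zero {Z : Set X} {h : ℝ≥0∞}
    (hZ : ∀ ε > 0, ∀ s : ℝ≥0, h < s → ∀ n, bowenH T Z s ε n = 0) : bowenEntropy T Z ≤ h :=
  iSup₂_le fun ε hε => le_of_forall_gt_imp_ge_of_dense fun _ hc => by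
    obtain ⟨s, hs, hsc⟩ := ENNReal.lt_iff_exists_nnreal_btwn.1 hc
    exact (bowenEntropyRes_le (hZ ε hε s hs)).trans hsc.le

theorem bowenEntropyRes_mono {Z Z' : Set X} (h : Z ⊆ Z') :
    bowenEntropyRes T Z ε ≤ bowenEntropyRes T Z' ε :=
  sInf_le_sInf (image_mono fun _ hs =>
    le_antisymm ((iSup_mono fun _ => bowenH_mono h).trans_eq hs) zero_le)

theorem bowenEntropy_mono {Z Z' : Set X} (h : Z ⊆ Z') : bowenEntropy T Z ≤ bowenEntropy T Z' :=
  iSup₂_mono fun _ _ => bowenEntropyRes_mono h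

end BowenEntropy

section Kraft

variable {A : Type*} [Fintype A]

theorem card_sum_le_exp_of_kraft {ι : Type*} [Fintype ι] [DecidableEq ι] {ℓ : A → ℝ}
    (hℓ : ∑ a, Real.exp (-ℓ a) ≤ 1) (B : ℝ) :
    (({f : ι → A | ∑ i, ℓ (f i) ≤ B} : Finset (ι → A)).card : ℝ) ≤ Real.exp B := by
  set S : Finset (ι → A) := {f | ∑ i, ℓ (f i) ≤ B}
  have hone : ∀ f ∈ S, 1 ≤ Real.exp B * ∏ i, Real.exp (-ℓ (f i)) := fun f hf => by
    rw [← Real.exp_sum, ← Real.exp_add, Finset.sum_neg_distrib, ← sub_eq_add_neg]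
    exact Real.one_le_exp (sub_nonneg.2 (Finset.mem_filter.1 hf).2)
  calc (S.card : ℝ) = ∑ _f ∈ S, 1 := by simp
    _ ≤ ∑ f ∈ S, Real.exp B * ∏ i, Real.exp (-ℓ (f i)) := Finset.sum_le_sum hone
    _ ≤ ∑ f : ι → A, Real.exp B * ∏ i, Real.exp (-ℓ (f i)) :=
        Finset.sum_le_sum_of_subset_of_nonneg (Finset.subset_univ _) fun f _ _ => by positivity
    _ = Real.exp B * (∑ a, Real.exp (-ℓ a)) ^ Fintype.card ι := by
        rw [← Finset.mul_sum, ← Finset.card_univ, ← Finset.prod_const, Fintype.prod_sum]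
    _ ≤ Real.exp B := mul_le_of_le_one_right (Real.exp_pos B).le (pow_le_one₀ (by positivity) hℓ)

/- The optimal lengths `-log p` are infinite where `p` vanishes, so `p` is replaced by the
normalization of `p + t`, with `t` tending to `0`. -/
theorem exists_kraft_sum_mul_lt {p : A → ℝ} (hp : ∀ a, 0 ≤ p a) (hsum : ∑ a, p a = 1) {H : ℝ}
    (hH : ∑ a, Real.negMulLog (p a) < H) :
    ∃ ℓ : A → ℝ, ∑ a, Real.exp (-ℓ a) ≤ 1 ∧ ∑ a, p a * ℓ a < H := by
  let ℓ : ℝ → A → ℝ := fun t a => Real.log (1 + Fintype.card A * t) - Real.log (p a + t)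
  have hkraft : ∀ t > 0, ∑ a, Real.exp (-ℓ t a) ≤ 1 := fun t ht => by
    have hexp : ∀ a, Real.exp (-ℓ t a) = (p a + t) / (1 + Fintype.card A * t) := fun a => by
      rw [neg_sub, Real.exp_sub, Real.exp_log (add_pos_of_nonneg_of_pos (hp a) ht),
        Real.exp_log (by positivity)]
    simp only [hexp, ← Finset.sum_div, Finset.sum_add_distrib, hsum, Finset.sum_const,
      Finset.card_univ, nsmul_eq_mul]
    exact div_self_le_one _
  have hlim : ∀ a, Tendsto (fun t => p a * ℓ t a) (𝓝[>] 0) (𝓝 (Real.negMulLog (p a))) := fun a => by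
    rcases (hp a).eq_or_lt with hpa | hpa
    · simp [← hpa]
    · have hcont : ContinuousAt (fun t => p a * ℓ t a) 0 := by
        have hlog : p a + 0 ≠ 0 := by linarith
        have hlog' : 1 + Fintype.card A * (0 : ℝ) ≠ 0 := by simp
        fun_prop (disch := assumption)
      simpa [ℓ, Real.negMulLog] using hcont.tendsto.mono_left nhdsWithin_le_nhds
  obtain ⟨t, hlt, ht⟩ := (((tendsto_finsetSum Finset.univ fun a _ => hlim a).eventually_lt_const
    hH).and self_mem_nhdsWithin).exists
  exact ⟨ℓ t, hkraft t ht, hlt⟩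

end Kraft

section Residues

variable {M : Type*} [AddCommMonoid M]

theorem sum_range_mul_eq_sum_residues (f : ℕ → M) (L m : ℕ) :
    ∑ j ∈ Finset.range (L * m), f j = ∑ r : Fin m, ∑ i : Fin L, f (i * m + r) := by
  rw [Finset.sum_range, ← finProdFinEquiv.sum_comp, Fintype.sum_prod_type_right]
  simp only [finProdFinEquiv_apply_val, add_comm, mul_comm m]

theorem exists_residue_nsmul_sum_le [LinearOrder M] [IsOrderedAddMonoid M] {m : ℕ} (hm : 0 < m)
    (f : ℕ → M) (L : ℕ) :
    ∃ r : Fin m, m • ∑ i : Fin L, f (i * m + r) ≤ ∑ j ∈ Finset.range (L * m), f j := by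
  have : Nonempty (Fin m) := ⟨⟨0, hm⟩⟩
  obtain ⟨r, hr⟩ := Finite.exists_min fun r : Fin m => ∑ i : Fin L, f (i * m + r)
  rw [sum_range_mul_eq_sum_residues]
  exact ⟨r, by simpa using Finset.card_nsmul_le_sum Finset.univ _ _ fun r' _ => hr r'⟩

end Residues

/-- The `P`-name of length `m` of `x`: the word recording which cells of the partition `P`, encoded
as a function to a set `κ` of labels, are visited by `x, T x, …, T^(m-1) x`. -/
def orbitWord {κ : Type*} (T : X → X) (P : X → κ) (m : ℕ) (x : X) : Fin m → κ :=
  fun i => P (T^[i] x)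

section OrbitWord

variable {κ : Type*} {T : X → X} {P : X → κ} {x y : X} {m : ℕ}

theorem orbitWord_eq_iff :
    orbitWord T P m x = orbitWord T P m y ↔ ∀ j < m, P (T^[j] x) = P (T^[j] y) :=
  funext_iff.trans Fin.forall_iff

theorem orbitWord_eq_of_blocks_eq {L : ℕ}
    (h : ∀ i : Fin L, orbitWord T P m (T^[i * m] x) = orbitWord T P m (T^[i * m] y)) :
    orbitWord T P (L * m) x = orbitWord T P (L * m) y := by
  refine orbitWord_eq_iff.2 fun j hj => ?_
  have hm : 0 < m := Nat.pos_of_mul_pos_left (j.zero_le.trans_lt hj)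
  have hblock := orbitWord_eq_iff.1 (h ⟨j / m, Nat.div_lt_of_lt_mul (by rwa [mul_comm])⟩)
    (j % m) (Nat.mod_lt j hm)
  simpa only [← Function.iterate_add_apply, Nat.mod_add_div'] using hblock

theorem orbitWord_eq_of_le_of_shift_eq {r N : ℕ} (hr : r ≤ m)
    (hhead : orbitWord T P m x = orbitWord T P m y)
    (hshift : orbitWord T P N (T^[r] x) = orbitWord T P N (T^[r] y)) :
    orbitWord T P N x = orbitWord T P N y := by
  rw [orbitWord_eq_iff] at *
  intro j hj
  rcases lt_or_ge j r with hjr | hrj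
  · exact hhead j (hjr.trans_le hr)
  · simpa only [← Function.iterate_add_apply, Nat.sub_add_cancel hrj] using
      hshift (j - r) ((j.sub_le r).trans_lt hj)

theorem mem_bowenBall_of_orbitWord_eq [PseudoMetricSpace X] {ε : ℝ}
    (hP : ∀ x y, P x = P y → dist x y < ε) (h : orbitWord T P m x = orbitWord T P m y) :
    y ∈ bowenBall T x m ε :=
  fun j hj => hP _ _ (orbitWord_eq_iff.1 h j hj)

theorem measurable_orbitWord [MeasurableSpace X] [MeasurableSpace κ] (hT : Measurable T)
    (hP : Measurable P) (m : ℕ) : Measurable (orbitWord T P m) :=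
  measurable_pi_lambda _ fun i => hP.comp (hT.iterate i)

end OrbitWord

section Covering

variable [PseudoMetricSpace X] {κ : Type*} [Fintype κ] {T : X → X} {P : X → κ} {ε : ℝ} {m : ℕ}
  {ℓ : (Fin m → κ) → ℝ} {Z : Set X}

/- A point is determined, up to Bowen distance `ε`, by its best starting residue `r`, its first `m`
symbols and the `L` blocks of length `m` read from time `r` on; Kraft's inequality counts the
possible sequences of blocks. -/
theorem bowenH_le_of_birkhoffSum_le (hP : ∀ x y, P x = P y → dist x y < ε) (hm : 0 < m)
    (hℓ : ∑ a, Real.exp (-ℓ a) ≤ 1) {L n : ℕ} (hn : n ≤ L * m) {B : ℝ}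
    (hZ : ∀ x ∈ Z, birkhoffSum T (ℓ ∘ orbitWord T P m) (L * m) x ≤ m * B) (s : ℝ) :
    bowenH T Z s ε n ≤
      ENNReal.ofReal (m * Fintype.card (Fin m → κ) * Real.exp (B - s * (L * m))) := by
  classical
  choose r hr using fun x => exists_residue_nsmul_sum_le hm
    (fun j => ℓ (orbitWord T P m (T^[j] x))) L
  let blocks : X → Fin L → Fin m → κ := fun x i => orbitWord T P m (T^[i * m + r x] x)
  let S : Finset (Fin L → Fin m → κ) := {f | ∑ i, ℓ (f i) ≤ B}
  have hblocks : ∀ x ∈ Z, blocks x ∈ S := fun x hx => by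
    refine Finset.mem_filter.2 ⟨Finset.mem_univ _, ?_⟩
    refine le_of_mul_le_mul_left ?_ (Nat.cast_pos (α := ℝ).2 hm)
    rw [← nsmul_eq_mul]
    exact (hr x).trans (hZ x hx)
  have hcover := bowenH_le_card_mul_exp (T := T) (Z := Z) (s := s) (ε := ε) hn
    (code := fun x => (r x, orbitWord T P m x, blocks x))
    (S := Finset.univ ×ˢ Finset.univ ×ˢ S) (fun x hx => by simpa using hblocks x hx)
    fun x y hxy => by
      obtain ⟨hphase, hhead, hblock⟩ : r x = r y ∧ _ ∧ blocks x = blocks y := by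
        simpa only [Prod.mk.injEq] using hxy
      refine mem_bowenBall_of_orbitWord_eq hP
        (orbitWord_eq_of_le_of_shift_eq (r x).2.le hhead (orbitWord_eq_of_blocks_eq fun i => ?_))
      simpa only [blocks, ← hphase, Function.iterate_add_apply] using congrFun hblock i
  calc bowenH T Z s ε n
      ≤ ENNReal.ofReal (m * (Fintype.card (Fin m → κ) * S.card) * Real.exp (-s * (L * m))) := by
        rw [ENNReal.ofReal_mul (by positivity)]
        simpa [ENNReal.ofReal_mul] using hcover
    _ ≤ ENNReal.ofReal (m * (Fintype.card (Fin m → κ) * Real.exp B) * Real.exp (-s * (L * m))) := by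
        gcongr
        exact card_sum_le_exp_of_kraft hℓ B
    _ = ENNReal.ofReal (m * Fintype.card (Fin m → κ) * Real.exp (B - s * (L * m))) := by
        rw [sub_eq_add_neg, Real.exp_add, neg_mul]
        ring_nf

variable {s s' : ℝ}

theorem bowenH_eq_zero_of_forall_birkhoffSum_le (hP : ∀ x y, P x = P y → dist x y < ε)
    (hm : 0 < m) (hℓ : ∑ a, Real.exp (-ℓ a) ≤ 1) (hs : s < s') {N : ℕ}
    (hZ : ∀ x ∈ Z, ∀ n ≥ N, birkhoffSum T (ℓ ∘ orbitWord T P m) n x ≤ n * (m * s)) (n : ℕ) :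
    bowenH T Z s' ε n = 0 := by
  have hbound : ∀ L ≥ max n N, bowenH T Z s' ε n ≤ ENNReal.ofReal
      (m * Fintype.card (Fin m → κ) * Real.exp (L * m * s - s' * (L * m))) := fun L hL => by
    have hL' : max n N ≤ L * m := hL.trans (Nat.le_mul_of_pos_right L hm)
    refine bowenH_le_of_birkhoffSum_le hP hm hℓ (le_of_max_le_left hL') (fun x hx => ?_) s'
    refine (hZ x hx (L * m) (le_of_max_le_right hL')).trans_eq ?_
    push_cast
    ring
  have hrate : (m : ℝ) * (s - s') < 0 :=
    mul_neg_of_pos_of_neg (Nat.cast_pos.2 hm) (sub_neg.2 hs)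
  have hexp : Tendsto (fun L : ℕ => Real.exp (L * m * s - s' * (L * m))) atTop (𝓝 0) := by
    refine Real.tendsto_exp_atBot.comp ?_
    refine (tendsto_natCast_atTop_atTop.const_mul_atTop_of_neg hrate).congr fun L => ?_
    ring
  have hlim := ENNReal.tendsto_ofReal (hexp.const_mul (m * Fintype.card (Fin m → κ) : ℝ))
  rw [mul_zero, ENNReal.ofReal_zero] at hlim
  exact nonpos_iff_eq_zero.1 (ge_of_tendsto hlim ((eventually_ge_atTop _).mono hbound))

theorem bowenH_eq_zero_of_eventually_birkhoffSum_le (hP : ∀ x y, P x = P y → dist x y < ε)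
    (hm : 0 < m) (hℓ : ∑ a, Real.exp (-ℓ a) ≤ 1) (hs : s < s')
    (hZ : ∀ x ∈ Z, ∀ᶠ n in atTop, birkhoffSum T (ℓ ∘ orbitWord T P m) n x ≤ n * (m * s))
    (n : ℕ) : bowenH T Z s' ε n = 0 := by
  let W : ℕ → Set X := fun N =>
    {x | ∀ k ≥ N, birkhoffSum T (ℓ ∘ orbitWord T P m) k x ≤ k * (m * s)}
  have hsub : Z ⊆ ⋃ N, W N := fun x hx => mem_iUnion.2 (eventually_atTop.1 (hZ x hx))
  have hW : ∀ N, bowenH T (W N) s' ε n = 0 := fun N =>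
    bowenH_eq_zero_of_forall_birkhoffSum_le hP hm hℓ hs (fun _ hx => hx) n
  exact le_antisymm ((bowenH_mono hsub).trans_eq (bowenH_iUnion_eq_zero hW)) zero_le

end Covering

section AEContinuous

theorem not_continuousAt_of_mem_frontier_preimage {Y : Type*} [TopologicalSpace X]
    [TopologicalSpace Y] {g : X → Y} {s : Set Y} (hs : IsClopen s) {x : X}
    (hx : x ∈ frontier (g ⁻¹' s)) : ¬ContinuousAt g x := by
  intro hg
  rw [frontier_eq_closure_inter_closure, ← preimage_compl] at hx
  have hmem : ∀ t : Set Y, IsClosed t → x ∈ closure (g ⁻¹' t) → g x ∈ t := fun t ht hxt =>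
    ht.mem_of_frequently_of_tendsto (f := g) (mem_closure_iff_frequently.1 hxt) hg
  exact hmem sᶜ hs.compl.isClosed hx.2 (hmem s hs.isClosed hx.1)

theorem continuousAt_boolIndicator_of_notMem_frontier [TopologicalSpace X] {s : Set X} {x : X}
    (hx : x ∉ frontier s) : ContinuousAt s.boolIndicator x := by
  have hconst : ∀ {b}, s.boolIndicator =ᶠ[𝓝 x] (fun _ => b) → ContinuousAt s.boolIndicator x :=
    fun h => continuousAt_const.congr h.symm
  rw [frontier_eq_closure_inter_closure, mem_inter_iff, not_and_or] at hx
  rcases hx with hx | hx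
  · refine hconst (b := false) ?_
    filter_upwards [isClosed_closure.isOpen_compl.mem_nhds hx] with y hy
    exact (notMem_iff_boolIndicator s y).1 fun hys => hy (subset_closure hys)
  · refine hconst (b := true) ?_
    filter_upwards [isClosed_closure.isOpen_compl.mem_nhds hx] with y hy
    exact (mem_iff_boolIndicator s y).1 (not_not.1 fun hys => hy (subset_closure hys))

variable [MeasurableSpace X]

theorem ae_continuousAt_orbitWord [TopologicalSpace X] {κ : Type*} [TopologicalSpace κ]
    {T : X → X} {P : X → κ} {μ : Measure X} (hT : ∀ᵐ x ∂μ, ContinuousAt T x)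
    (hμ : Measure.QuasiMeasurePreserving T μ μ) (hP : ∀ᵐ x ∂μ, ContinuousAt P x) (m : ℕ) :
    ∀ᵐ x ∂μ, ContinuousAt (orbitWord T P m) x := by
  have horbit : ∀ {p : X → Prop}, (∀ᵐ x ∂μ, p x) → ∀ᵐ x ∂μ, ∀ j, p (T^[j] x) := fun hp =>
    ae_all_iff.2 fun j => (hμ.iterate j).ae hp
  filter_upwards [horbit hT, horbit hP] with x hTx hPx
  have hiter : ∀ j, ContinuousAt T^[j] x := fun j => by
    induction j with
    | zero => exact continuousAt_id
    | succ j ih => simpa only [Function.iterate_succ'] using (hTx j).comp ih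
  exact continuousAt_pi.2 fun i => (hPx i).comp (hiter i)

theorem integral_comp_eq_sum {A : Type*} [Fintype A] [MeasurableSpace A]
    [MeasurableSingletonClass A] (ν : Measure X) [IsFiniteMeasure ν] {g : X → A}
    (hg : Measurable g) (φ : A → ℝ) :
    ∫ y, φ (g y) ∂ν = ∑ a, ν.real (g ⁻¹' {a}) * φ a := by
  rw [← integral_map (φ := g) (f := φ) hg.aemeasurable
    Measurable.of_discrete.aestronglyMeasurable, integral_fintype .of_finite]
  simp [map_measureReal_apply hg (measurableSet_singleton _)]

theorem tendsto_integral_comp_of_ae_continuousAt [TopologicalSpace X] [OpensMeasurableSpace X]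
    [HasOuterApproxClosed X] {ι : Type*} {l : Filter ι} {νs : ι → ProbabilityMeasure X}
    {ν : ProbabilityMeasure X} (hνs : Tendsto νs l (𝓝 ν)) {A : Type*} [Finite A]
    [TopologicalSpace A] [DiscreteTopology A] [MeasurableSpace A] [MeasurableSingletonClass A]
    {g : X → A} (hg : Measurable g) (hgν : ∀ᵐ x ∂(ν : Measure X), ContinuousAt g x) (φ : A → ℝ) :
    Tendsto (fun i => ∫ y, φ (g y) ∂(νs i : Measure X)) l
      (𝓝 (∫ y, φ (g y) ∂(ν : Measure X))) := by
  have := Fintype.ofFinite A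
  have hfrontier : ∀ a, (ν : Measure X) (frontier (g ⁻¹' {a})) = 0 := fun a =>
    measure_mono_null (fun _ => not_continuousAt_of_mem_frontier_preimage (isClopen_discrete {a}))
      hgν
  simp only [integral_comp_eq_sum _ hg φ]
  exact tendsto_finsetSum _ fun a _ => ((ENNReal.tendsto_toReal (measure_ne_top _ _)).comp
    (ProbabilityMeasure.tendsto_measure_of_null_frontier_of_tendsto' hνs (hfrontier a))).mul_const _

theorem exists_partition_dist_lt [PseudoMetricSpace X] [OpensMeasurableSpace X]
    (hX : TotallyBounded (univ : Set X)) (μ : Measure X) [SFinite μ] {ε : ℝ} (hε : 0 < ε) :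
    ∃ (k : ℕ) (P : X → Fin k), Measurable P ∧ (∀ᵐ x ∂μ, ContinuousAt P x) ∧
      ∀ x y, P x = P y → dist x y < ε := by
  obtain ⟨t, htfin, ht⟩ := Metric.totallyBounded_iff.1 hX (ε / 4) (by positivity)
  have hradius : ∀ x : X, ∃ r ∈ Ioo (ε / 4) (ε / 2), μ (frontier (Metric.ball x r)) = 0 :=
    fun x => by
      simpa [Metric.thickening_singleton] using
        exists_null_frontier_thickening μ {x} (show ε / 4 < ε / 2 by linarith)
  choose r hr hfrontier using hradius
  have : Finite t := htfin
  have := Fintype.ofFinite (t → Bool)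
  let Q : X → t → Bool := fun x z => (Metric.ball (z : X) (r z)).boolIndicator x
  let e := Fintype.equivFin (t → Bool)
  have hQm : Measurable Q := measurable_pi_lambda _ fun z => measurable_to_bool <| by
    rw [preimage_boolIndicator_true]
    exact Metric.isOpen_ball.measurableSet
  have hQc : ∀ᵐ x ∂μ, ContinuousAt Q x := by
    filter_upwards [ae_all_iff.2 fun z : t => measure_eq_zero_iff_ae_notMem.1 (hfrontier z)]
      with x hx
    exact continuousAt_pi.2 fun z => continuousAt_boolIndicator_of_notMem_frontier (hx z)
  refine ⟨_, e ∘ Q, Measurable.of_discrete.comp hQm, hQc.mono fun x hx =>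
    continuous_of_discreteTopology.continuousAt.comp hx, fun x y hxy => ?_⟩
  obtain ⟨z, hz, hxz⟩ := mem_iUnion₂.1 (ht (mem_univ x))
  have hxr : x ∈ Metric.ball z (r z) := Metric.ball_subset_ball (hr z).1.le hxz
  have hyr : y ∈ Metric.ball z (r z) := by
    rw [mem_iff_boolIndicator] at hxr ⊢
    exact (congrFun (e.injective hxy) ⟨z, hz⟩).symm.trans hxr
  calc dist x y ≤ dist x z + dist y z := dist_triangle_right x y z
    _ < ε / 2 + ε / 2 := add_lt_add (hxr.trans (hr z).2) (hyr.trans (hr z).2)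
    _ = ε := add_halves ε

end AEContinuous

section Entropy

variable [MeasurableSpace X] {T : X → X} {μ : Measure X} [IsProbabilityMeasure μ] {k : ℕ}

theorem sum_negMulLog_le_partInfo (P : X → Fin k) (m : ℕ) :
    ENNReal.ofReal (∑ a, Real.negMulLog (μ.real (orbitWord T P m ⁻¹' {a})))
      ≤ partInfo T μ (fun x => (P x : ℕ)) m := by
  let toList : (Fin m → Fin k) → List ℕ := fun a => List.ofFn fun i => (a i : ℕ)
  have hinj : Function.Injective toList :=
    List.ofFn_injective.comp (Fin.val_injective.comp_left)
  have hname : (fun x => (List.range m).map fun j => (P (T^[j] x) : ℕ)) =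
      toList ∘ orbitWord T P m := by
    funext x
    rw [← List.map_coe_finRange_eq_range, List.map_map]
    exact List.ofFn_eq_map.symm
  have hterm : ∀ a, ENNReal.ofReal (Real.negMulLog (μ.real (orbitWord T P m ⁻¹' {a}))) =
      ENNReal.ofReal (Real.negMulLog (μ.real ((toList ∘ orbitWord T P m) ⁻¹' {toList a}))) :=
    fun a => by rw [preimage_comp, ← image_singleton, hinj.preimage_image]
  rw [ENNReal.ofReal_sum_of_nonneg fun a _ =>
    Real.negMulLog_nonneg measureReal_nonneg measureReal_le_one, Finset.sum_congr rfl
    fun a _ => hterm a, ← tsum_fintype (L := .unconditional _), partInfo, hname]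
  exact ENNReal.tsum_comp_le_tsum_of_injective hinj _

theorem exists_sum_negMulLog_lt_of_ksEntropy_lt {P : X → Fin k} (hP : Measurable P) {s : ℝ≥0}
    (hs : ksEntropy T μ < s) :
    ∃ m > 0, ∑ a, Real.negMulLog (μ.real (orbitWord T P m ⁻¹' {a})) < m * s := by
  have hrange : (range fun x => (P x : ℕ)).Finite :=
    (finite_range Fin.val).subset (range_comp_subset_range P Fin.val)
  have hliminf :
      liminf (fun m : ℕ => partInfo T μ (fun x => (P x : ℕ)) m / (m : ℝ≥0∞)) atTop < s := by
    refine lt_of_le_of_lt ?_ hs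
    refine le_iSup₂_of_le (fun x => (P x : ℕ)) (Measurable.of_discrete.comp hP) ?_
    exact le_iSup_of_le hrange le_rfl
  obtain ⟨m, hlt, hm⟩ := ((frequently_lt_of_liminf_lt (by isBoundedDefault) hliminf).and_eventually
    (eventually_gt_atTop 0)).exists
  rw [ENNReal.div_lt_iff (.inl (by exact_mod_cast hm.ne')) (.inl (ENNReal.natCast_ne_top m))] at hlt
  refine ⟨m, hm, (ENNReal.ofReal_lt_ofReal_iff_of_nonneg (Finset.sum_nonneg fun a _ =>
    Real.negMulLog_nonneg measureReal_nonneg measureReal_le_one)).1 ?_⟩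
  refine ((sum_negMulLog_le_partInfo P m).trans_lt hlt).trans_eq ?_
  rw [mul_comm, ENNReal.ofReal_mul m.cast_nonneg, ENNReal.ofReal_natCast, ENNReal.ofReal_coe_nnreal]

theorem exists_kraft_integral_lt_of_ksEntropy_lt (hT : Measurable T) {P : X → Fin k}
    (hP : Measurable P) {s : ℝ≥0} (hs : ksEntropy T μ < s) :
    ∃ m > 0, ∃ ℓ : (Fin m → Fin k) → ℝ, ∑ a, Real.exp (-ℓ a) ≤ 1 ∧
      ∫ x, ℓ (orbitWord T P m x) ∂μ < m * s := by
  obtain ⟨m, hm, hentropy⟩ := exists_sum_negMulLog_lt_of_ksEntropy_lt hP hs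
  have hword := measurable_orbitWord hT hP m
  have hsum : ∑ a, μ.real (orbitWord T P m ⁻¹' {a}) = 1 := by
    simpa using (integral_comp_eq_sum μ hword fun _ => (1 : ℝ)).symm
  obtain ⟨ℓ, hkraft, hlt⟩ := exists_kraft_sum_mul_lt (fun _ => measureReal_nonneg) hsum hentropy
  exact ⟨m, hm, ℓ, hkraft, (integral_comp_eq_sum μ hword ℓ).trans_lt hlt⟩

end Entropy

/-- The empirical measure of the first `n + 1` points of the orbit of `x`; the shift by one makes it
a probability measure for every `n`. -/
noncomputable def empiricalMeasure [MeasurableSpace X] (T : X → X) (x : X) (n : ℕ) :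
    ProbabilityMeasure X :=
  ⟨((n + 1 : ℕ) : ℝ≥0∞)⁻¹ • ∑ j ∈ Finset.range (n + 1), Measure.dirac (T^[j] x), ⟨by
    simpa using ENNReal.inv_mul_cancel (by simp) (by finiteness)⟩⟩

section EmpiricalMeasure

variable [MeasurableSpace X] {T : X → X} {x : X}

theorem integral_empiricalMeasure {f : X → ℝ} (hf : Measurable f) (n : ℕ) :
    ∫ y, f y ∂(empiricalMeasure T x n : Measure X) = birkhoffAverage ℝ T f (n + 1) x := by
  have hint : ∀ y, Integrable f (Measure.dirac y) := fun y =>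
    integrable_dirac' hf.stronglyMeasurable (by simp)
  simp only [empiricalMeasure, ProbabilityMeasure.coe_mk]
  rw [integral_smul_measure, integral_finsetSum_measure fun j _ => hint _]
  simp only [integral_dirac' _ _ hf.stronglyMeasurable, ENNReal.toReal_inv, ENNReal.toReal_natCast]
  rfl

theorem IsGeneric.tendsto_empiricalMeasure [TopologicalSpace X] [OpensMeasurableSpace X]
    {μ : ProbabilityMeasure X} (hx : IsGeneric T μ x) :
    Tendsto (empiricalMeasure T x) atTop (𝓝 μ) := by
  refine ProbabilityMeasure.tendsto_iff_forall_integral_tendsto.2 fun f => ?_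
  refine ((tendsto_add_atTop_iff_nat 1).2 (hx f.toContinuousMap)).congr fun n => ?_
  rw [integral_empiricalMeasure f.continuous.measurable, birkhoffAverage, smul_eq_mul,
    ← div_eq_inv_mul]
  rfl

theorem eventually_birkhoffSum_le_of_integral_lt [TopologicalSpace X] [OpensMeasurableSpace X]
    [HasOuterApproxClosed X] {μ : ProbabilityMeasure X}
    (hx : Tendsto (empiricalMeasure T x) atTop (𝓝 μ)) {A : Type*} [Finite A]
    [TopologicalSpace A] [DiscreteTopology A] [MeasurableSpace A] [MeasurableSingletonClass A]
    {g : X → A} (hg : Measurable g) (hgμ : ∀ᵐ x ∂(μ : Measure X), ContinuousAt g x) {φ : A → ℝ}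
    {c : ℝ} (hc : ∫ y, φ (g y) ∂(μ : Measure X) < c) :
    ∀ᶠ n : ℕ in atTop, birkhoffSum T (φ ∘ g) n x ≤ n * c := by
  have hφg : Measurable (φ ∘ g) := Measurable.of_discrete.comp hg
  have hlim := tendsto_integral_comp_of_ae_continuousAt hx hg hgμ φ
  rw [← map_add_atTop_eq_nat 1, eventually_map]
  filter_upwards [hlim.eventually_lt_const hc] with n hn
  rw [show (∫ y, φ (g y) ∂(empiricalMeasure T x n : Measure X)) = _ from
    integral_empiricalMeasure hφg n, birkhoffAverage, smul_eq_mul,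
    inv_mul_lt_iff₀ (by positivity)] at hn
  exact hn.le

end EmpiricalMeasure

theorem entropy_of_generic_le_general [PseudoMetricSpace X] [MeasurableSpace X]
    [OpensMeasurableSpace X] (hX : TotallyBounded (univ : Set X)) {T : X → X}
    {μ : ProbabilityMeasure X} (hT : ∀ᵐ x ∂(μ : Measure X), ContinuousAt T x)
    (hinv : MeasurePreserving T (μ : Measure X) μ) :
    bowenEntropy T {x | Tendsto (empiricalMeasure T x) atTop (𝓝 μ)} ≤
      ksEntropy T (μ : Measure X) := by
  refine bowenEntropy_le_of_forall_bowenH_eq_zero fun ε hε s' hs' => ?_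
  obtain ⟨s, hs, hss'⟩ := ENNReal.lt_iff_exists_nnreal_btwn.1 hs'
  obtain ⟨k, P, hPm, hPc, hPε⟩ := exists_partition_dist_lt hX (μ : Measure X) hε
  obtain ⟨m, hm, ℓ, hkraft, hlt⟩ :=
    exists_kraft_integral_lt_of_ksEntropy_lt hinv.measurable hPm hs
  refine bowenH_eq_zero_of_eventually_birkhoffSum_le hPε hm hkraft (by exact_mod_cast hss')
    fun x hx => ?_
  exact eventually_birkhoffSum_le_of_integral_lt hx (measurable_orbitWord hinv.measurable hPm m)
    (ae_continuousAt_orbitWord hT hinv.quasiMeasurePreserving hPc m) hlt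

/-- **(Bowen).** For any dynamical system on a compact metric space and any invariant
Borel probability measure `μ`, the Bowen topological entropy of the set of `μ`-generic
points is at most `h_μ`. -/
theorem entropy_of_generic_le {X : Type*} [MetricSpace X] [CompactSpace X]
    [MeasurableSpace X] [BorelSpace X] (T : X → X) (hT : Continuous T)
    (μ : Measure X) (hμ : IsProbabilityMeasure μ) (hinv : MeasurePreserving T μ μ) :
    bowenEntropy T {x : X | IsGeneric T μ x} ≤ ksEntropy T μ := by
  let ν : ProbabilityMeasure X := ⟨μ, hμ⟩
  have hgeneric : {x | IsGeneric T μ x} ⊆ {x | Tendsto (empiricalMeasure T x) atTop (𝓝 ν)} :=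
    fun _ hx => hx.tendsto_empiricalMeasure (μ := ν)
  exact (bowenEntropy_mono hgeneric).trans
    (entropy_of_generic_le_general isCompact_univ.totallyBounded
      (.of_forall fun _ => hT.continuousAt) hinv)
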